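/- For all sufficiently large natural numbers n the following holds: let c be a natural number with n/7 ≤ c < n − 3·log n, write ξ = c/n, let X be a binomially distributed random variable with n − c trials and success probability 1 − (1 − 1/n)^{c/2}, and set δ = √(3·log n/(n − c)). Then Prob[X ≤ (1 − δ)·E[X]] ≤ n^{−3·(1 − e^{−ξ/2})/2}. -/

import Mathlib

open Real Filter

open Finset MeasureTheory ProbabilityTheory InformationTheory

/-!
Optimising the exponential moment bound for the lower tail of `Bin(m, p)` gives the exponent
`m * p * klFun (1 - δ)`, and `klFun (1 - δ) ≥ δ ^ 2 / 2`. The choice of `δ` makes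
`δ ^ 2 * m = 3 * log n`, so the tail is at most `n ^ (-(3 * p / 2))`. Finally
`(1 - 1 / n) ^ (c / 2) ≤ exp (-c / (2 * n))` bounds `p` from below by `1 - exp (-ξ / 2)`.
-/

section RealInequalities

theorem one_sub_rpow_le_exp_neg_mul {x y : ℝ} (hx : x ≤ 1) (hy : 0 ≤ y) :
    (1 - x) ^ y ≤ exp (-(x * y)) :=
  calc
    (1 - x) ^ y ≤ exp (-x) ^ y := rpow_le_rpow (sub_nonneg.2 hx) (one_sub_le_exp_neg x) hy
    _ = exp (-(x * y)) := by rw [← exp_mul, neg_mul]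

theorem one_sub_sq_div_two_le_klFun {x : ℝ} (hx₀ : 0 ≤ x) (hx₁ : x ≤ 1) :
    (1 - x) ^ 2 / 2 ≤ klFun x := by
  rcases hx₀.eq_or_lt with rfl | hx
  · norm_num [klFun_zero]
  -- The claim is `-log x ≤ sinh (-log x)`, multiplied by `x`.
  have log_bound : -log x ≤ (x⁻¹ - x) / 2 := by
    have h := self_le_sinh_iff.2 (neg_nonneg.2 (log_nonpos hx₀ hx₁))
    rwa [sinh_eq, neg_neg, exp_neg, exp_log hx] at h
  have mul_log_bound : x * -log x ≤ (1 - x ^ 2) / 2 :=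
    calc
      x * -log x ≤ x * ((x⁻¹ - x) / 2) := mul_le_mul_of_nonneg_left log_bound hx₀
      _ = (1 - x ^ 2) / 2 := by field_simp
  rw [klFun_apply]
  linarith

end RealInequalities

section BinomialLowerTail

variable (m : ℕ) (p : unitInterval)

theorem binomial_real_eq_sum_ite (s : Set ℕ) [DecidablePred (· ∈ s)] :
    Bin(m, p).real s =
      ∑ k ∈ range (m + 1),
        if k ∈ s then (m.choose k : ℝ) * (p : ℝ) ^ k * (1 - p) ^ (m - k) else 0 := by
  rw [← integral_indicator_one MeasurableSet.of_discrete, integral_binomial,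
    Nat.range_succ_eq_Iic]
  simp [Set.indicator_apply]

theorem mgf_natCast_binomial (t : ℝ) :
    mgf (fun k : ℕ ↦ (k : ℝ)) Bin(m, p) t = (p * exp t + (1 - p)) ^ m := by
  rw [mgf, integral_binomial, add_pow, Nat.range_succ_eq_Iic]
  refine sum_congr rfl fun k _ ↦ ?_
  rw [mul_comm t, exp_nat_mul, mul_pow, smul_eq_mul]
  ring

theorem mgf_natCast_binomial_le_exp (t : ℝ) :
    mgf (fun k : ℕ ↦ (k : ℝ)) Bin(m, p) t ≤ exp (m * p * (exp t - 1)) := by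
  have base_nonneg : 0 ≤ (p : ℝ) * exp t + (1 - p) :=
    add_nonneg (mul_nonneg p.2.1 (exp_nonneg t)) (sub_nonneg.2 p.2.2)
  calc
    mgf (fun k : ℕ ↦ (k : ℝ)) Bin(m, p) t = (p * exp t + (1 - p)) ^ m :=
      mgf_natCast_binomial m p t
    _ ≤ exp (p * (exp t - 1)) ^ m := by
      gcongr
      linarith [add_one_le_exp ((p : ℝ) * (exp t - 1))]
    _ = exp (m * p * (exp t - 1)) := by rw [← exp_nat_mul, mul_assoc]

theorem binomial_real_le_mul_mean_le_exp_klFun {s : ℝ} (hs₀ : 0 ≤ s) (hs₁ : s ≤ 1) :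
    Bin(m, p).real {k | (k : ℝ) ≤ s * (m * p)} ≤ exp (-(m * p * klFun s)) := by
  rcases hs₀.eq_or_lt with rfl | hs
  · have event_eq : {k : ℕ | (k : ℝ) ≤ 0 * (m * p)} = {0} := by ext k; simp
    calc
      Bin(m, p).real {k | (k : ℝ) ≤ 0 * (m * p)} = (1 - p) ^ m := by
        rw [event_eq, binomial_real_zero]
      _ ≤ exp (-p) ^ m := pow_le_pow_left₀ (sub_nonneg.2 p.2.2) (one_sub_le_exp_neg _) m
      _ = exp (-(m * p * klFun 0)) := by rw [← exp_nat_mul, klFun_zero, mul_one, mul_neg]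
  calc
    Bin(m, p).real {k | (k : ℝ) ≤ s * (m * p)}
        ≤ exp (-log s * (s * (m * p))) * mgf (fun k : ℕ ↦ (k : ℝ)) Bin(m, p) (log s) :=
      measure_le_le_exp_mul_mgf _ (log_nonpos hs₀ hs₁) (integrable_binomial _)
    _ ≤ exp (-log s * (s * (m * p))) * exp (m * p * (exp (log s) - 1)) :=
      mul_le_mul_of_nonneg_left (mgf_natCast_binomial_le_exp m p _) (exp_nonneg _)
    _ = exp (-(m * p * klFun s)) := by
      rw [← exp_add, exp_log hs, klFun_apply]
      ring_nf

theorem binomial_real_le_one_sub_mul_mean_le_exp {δ : ℝ} (hδ : 0 ≤ δ) :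
    Bin(m, p).real {k | (k : ℝ) ≤ (1 - δ) * (m * p)} ≤ exp (-(m * p * (δ ^ 2 / 2))) := by
  have mean_nonneg : 0 ≤ (m * p : ℝ) := mul_nonneg m.cast_nonneg p.2.1
  rcases le_or_gt δ 1 with hδ₁ | hδ₁
  · have sq_le_klFun : δ ^ 2 / 2 ≤ klFun (1 - δ) := by
      simpa using one_sub_sq_div_two_le_klFun (sub_nonneg.2 hδ₁) (sub_le_self 1 hδ)
    calc
      Bin(m, p).real {k | (k : ℝ) ≤ (1 - δ) * (m * p)} ≤ exp (-(m * p * klFun (1 - δ))) :=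
        binomial_real_le_mul_mean_le_exp_klFun m p (sub_nonneg.2 hδ₁) (sub_le_self 1 hδ)
      _ ≤ exp (-(m * p * (δ ^ 2 / 2))) := by gcongr
  rcases mean_nonneg.eq_or_lt with mean_zero | mean_pos
  · rw [← mean_zero, zero_mul, neg_zero, exp_zero]
    exact measureReal_le_one
  · have event_empty : {k : ℕ | (k : ℝ) ≤ (1 - δ) * (m * p)} = ∅ := by
      refine Set.eq_empty_of_forall_notMem fun k hk ↦ ?_
      exact (mul_neg_of_neg_of_pos (sub_neg.2 hδ₁) mean_pos).not_ge (k.cast_nonneg.trans hk)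
    rw [event_empty, measureReal_empty]
    exact exp_nonneg _

end BinomialLowerTail

theorem stmt_12_general {n c : ℕ} (hcn : c < n) {ξ p δ : ℝ}
    (hξ : ξ = (c : ℝ) / (n : ℝ))
    (hp : p = 1 - (1 - 1 / (n : ℝ)) ^ ((c : ℝ) / 2))
    (hδ : δ = √(3 * log n / ((n : ℝ) - (c : ℝ)))) :
    (∑ k ∈ range (n - c + 1),
        if (k : ℝ) ≤ (1 - δ) * (((n : ℝ) - (c : ℝ)) * p) then
          ((n - c).choose k : ℝ) * p ^ k * (1 - p) ^ (n - c - k)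
        else 0)
      ≤ (n : ℝ) ^ (-(3 * (1 - exp (-ξ / 2)) / 2)) := by
  have n_pos : (0 : ℝ) < n := by exact_mod_cast hcn.pos
  have trials_pos : (0 : ℝ) < n - c := sub_pos.2 (by exact_mod_cast hcn)
  have inv_le_one : 1 / (n : ℝ) ≤ 1 := by simpa using Nat.cast_inv_le_one n
  have p_mem : p ∈ unitInterval := by
    have base_nonneg : 0 ≤ 1 - 1 / (n : ℝ) := sub_nonneg.2 inv_le_one
    rw [hp]
    exact Set.Icc.one_sub_mem ⟨rpow_nonneg base_nonneg _,
      rpow_le_one base_nonneg (sub_le_self 1 (by positivity)) (by positivity)⟩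
  have le_p : 1 - exp (-ξ / 2) ≤ p := by
    have h := one_sub_rpow_le_exp_neg_mul inv_le_one (by positivity : 0 ≤ (c : ℝ) / 2)
    rw [show -(1 / (n : ℝ) * (c / 2)) = -ξ / 2 by rw [hξ]; ring] at h
    linarith
  have sq_δ : (n - c) * δ ^ 2 = 3 * log n := by
    rw [hδ, sq_sqrt (by positivity), mul_div_cancel₀ _ trials_pos.ne']
  have tail_bound := binomial_real_le_one_sub_mul_mean_le_exp (n - c) ⟨p, p_mem⟩
    (hδ ▸ sqrt_nonneg _ : 0 ≤ δ)
  rw [binomial_real_eq_sum_ite, Nat.cast_sub hcn.le] at tail_bound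
  calc
    _ ≤ exp (-((n - c) * p * (δ ^ 2 / 2))) := tail_bound
    _ = (n : ℝ) ^ (-(3 * p / 2)) := by
      rw [rpow_def_of_pos n_pos]
      congr 1
      linear_combination (-p / 2) * sq_δ
    _ ≤ (n : ℝ) ^ (-(3 * (1 - exp (-ξ / 2)) / 2)) := by
      gcongr
      exact_mod_cast hcn.pos

theorem stmt_12 :
    ∀ᶠ n : ℕ in atTop,
      ∀ c : ℕ, (n : ℝ) / 7 ≤ (c : ℝ) → (c : ℝ) < (n : ℝ) - 3 * Real.log n →
        ∀ ξ p δ : ℝ,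
          ξ = (c : ℝ) / (n : ℝ) →
          p = 1 - (1 - 1 / (n : ℝ)) ^ ((c : ℝ) / 2) →
          δ = Real.sqrt (3 * Real.log n / ((n : ℝ) - (c : ℝ))) →
          (∑ k ∈ Finset.range (n - c + 1),
              if (k : ℝ) ≤ (1 - δ) * (((n : ℝ) - (c : ℝ)) * p) then
                ((n - c).choose k : ℝ) * p ^ k * (1 - p) ^ (n - c - k)
              else 0)
            ≤ (n : ℝ) ^ (-(3 * (1 - Real.exp (-ξ / 2)) / 2)) :=
  .of_forall fun n c _ hc _ _ _ ↦ stmt_12_general <| by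
    exact_mod_cast hc.trans_le (sub_le_self (n : ℝ) (by positivity))
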